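/- In the logic PL^S₀, the formula ¬¬(A ⊃ B) ⇔ ¬(A ∧ ¬B) is not derivable for some (in fact, for propositional-variable) formulae A and B; consequently the strong equivalence ¬(A ⊃ B) ⇔ₛ (A ∧ ¬B) is not derivable. -/

import Mathlib

/-!  Deep embedding of the many-sorted paraconsistent logic `PL^S₀`
(a many-sorted version of López-Escobar's refutability calculus).

Formulae are built from atomic formulae (a predicate symbol applied to a list
of sorted individual variables) using implication `⊃`, conjunction `∧`,
disjunction `∨`, a primitive negation `¬`, and sorted quantifiers `∀`, `∃`.
Each variable carries a fixed sort given by a map `sortOf : V → S`;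
terms are just variables (no function symbols).  -/

inductive PLS0.Formula (S V P : Type) : Type
  | atom : P → List V → PLS0.Formula S V P
  | impl : PLS0.Formula S V P → PLS0.Formula S V P → PLS0.Formula S V P
  | conj : PLS0.Formula S V P → PLS0.Formula S V P → PLS0.Formula S V P
  | disj : PLS0.Formula S V P → PLS0.Formula S V P → PLS0.Formula S V P
  | neg  : PLS0.Formula S V P → PLS0.Formula S V P
  | all  : V → PLS0.Formula S V P → PLS0.Formula S V P
  | ex   : V → PLS0.Formula S V P → PLS0.Formula S V P

namespace PLS0

variable {S V P : Type} [DecidableEq V]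

/-- Free variables of a formula. -/
def Formula.free : Formula S V P → Set V
  | .atom _ args => {v | v ∈ args}
  | .impl A B => A.free ∪ B.free
  | .conj A B => A.free ∪ B.free
  | .disj A B => A.free ∪ B.free
  | .neg A => A.free
  | .all x A => A.free \ {x}
  | .ex x A => A.free \ {x}

/-- Bound variables of a formula. -/
def Formula.bound : Formula S V P → Set V
  | .atom _ _ => ∅
  | .impl A B => A.bound ∪ B.bound
  | .conj A B => A.bound ∪ B.bound
  | .disj A B => A.bound ∪ B.bound
  | .neg A => A.bound
  | .all x A => insert x A.bound
  | .ex x A => insert x A.bound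

/-- `A.subst x y` replaces the free occurrences of the variable `x` by the
variable `y` in `A`. -/
def Formula.subst (x y : V) : Formula S V P → Formula S V P
  | .atom p args => .atom p (args.map fun v => if v = x then y else v)
  | .impl A B => .impl (A.subst x y) (B.subst x y)
  | .conj A B => .conj (A.subst x y) (B.subst x y)
  | .disj A B => .disj (A.subst x y) (B.subst x y)
  | .neg A => .neg (A.subst x y)
  | .all z A => if z = x then .all z A else .all z (A.subst x y)
  | .ex z A => if z = x then .ex z A else .ex z (A.subst x y)

/-- Natural-deduction derivability `Γ ⊢ A` in `PL^S₀`.  The rules for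
`⊃, ∧, ∨, ∀, ∃` are the intuitionistic ones; the primitive negation is
governed by introduction/elimination rules for the negation of each
connective: `¬(A⊃B)` has the rules of `A∧¬B`, `¬(A∧B)` those of `¬A∨¬B`,
`¬(A∨B)` those of `¬A∧¬B`, `¬∀x A` those of `∃x ¬A`, `¬∃x A` those of
`∀x ¬A`, and `¬¬A` those of `A`. -/
inductive Deriv (sortOf : V → S) : Set (Formula S V P) → Formula S V P → Prop
  | ax {Γ A} : A ∈ Γ → Deriv sortOf Γ A
  -- implication
  | implI {Γ A B} : Deriv sortOf (insert A Γ) B → Deriv sortOf Γ (.impl A B)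
  | implE {Γ A B} : Deriv sortOf Γ (.impl A B) → Deriv sortOf Γ A → Deriv sortOf Γ B
  -- conjunction
  | conjI {Γ A B} : Deriv sortOf Γ A → Deriv sortOf Γ B → Deriv sortOf Γ (.conj A B)
  | conjE1 {Γ A B} : Deriv sortOf Γ (.conj A B) → Deriv sortOf Γ A
  | conjE2 {Γ A B} : Deriv sortOf Γ (.conj A B) → Deriv sortOf Γ B
  -- disjunction
  | disjI1 {Γ A B} : Deriv sortOf Γ A → Deriv sortOf Γ (.disj A B)
  | disjI2 {Γ A B} : Deriv sortOf Γ B → Deriv sortOf Γ (.disj A B)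
  | disjE {Γ A B C} : Deriv sortOf Γ (.disj A B) → Deriv sortOf (insert A Γ) C →
      Deriv sortOf (insert B Γ) C → Deriv sortOf Γ C
  -- universal quantifier
  | allI {Γ x A} : Deriv sortOf Γ A → (∀ C ∈ Γ, x ∉ Formula.free C) →
      Deriv sortOf Γ (.all x A)
  | allE {Γ x y A} : Deriv sortOf Γ (.all x A) → sortOf y = sortOf x →
      y ∉ Formula.bound A → Deriv sortOf Γ (A.subst x y)
  -- existential quantifier
  | exI {Γ x y A} : Deriv sortOf Γ (A.subst x y) → sortOf y = sortOf x →
      y ∉ Formula.bound A → Deriv sortOf Γ (.ex x A)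
  | exE {Γ x A C} : Deriv sortOf Γ (.ex x A) → Deriv sortOf (insert A Γ) C →
      (∀ D ∈ Γ, x ∉ Formula.free D) → x ∉ Formula.free C → Deriv sortOf Γ C
  -- negated implication (rules of `A ∧ ¬B`)
  | negImplI {Γ A B} : Deriv sortOf Γ A → Deriv sortOf Γ (.neg B) →
      Deriv sortOf Γ (.neg (.impl A B))
  | negImplE1 {Γ A B} : Deriv sortOf Γ (.neg (.impl A B)) → Deriv sortOf Γ A
  | negImplE2 {Γ A B} : Deriv sortOf Γ (.neg (.impl A B)) → Deriv sortOf Γ (.neg B)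
  -- negated conjunction (rules of `¬A ∨ ¬B`)
  | negConjI1 {Γ A B} : Deriv sortOf Γ (.neg A) → Deriv sortOf Γ (.neg (.conj A B))
  | negConjI2 {Γ A B} : Deriv sortOf Γ (.neg B) → Deriv sortOf Γ (.neg (.conj A B))
  | negConjE {Γ A B C} : Deriv sortOf Γ (.neg (.conj A B)) →
      Deriv sortOf (insert (.neg A) Γ) C → Deriv sortOf (insert (.neg B) Γ) C →
      Deriv sortOf Γ C
  -- negated disjunction (rules of `¬A ∧ ¬B`)
  | negDisjI {Γ A B} : Deriv sortOf Γ (.neg A) → Deriv sortOf Γ (.neg B) →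
      Deriv sortOf Γ (.neg (.disj A B))
  | negDisjE1 {Γ A B} : Deriv sortOf Γ (.neg (.disj A B)) → Deriv sortOf Γ (.neg A)
  | negDisjE2 {Γ A B} : Deriv sortOf Γ (.neg (.disj A B)) → Deriv sortOf Γ (.neg B)
  -- negated universal (rules of `∃x ¬A`)
  | negAllI {Γ x y A} : Deriv sortOf Γ (.neg (A.subst x y)) → sortOf y = sortOf x →
      y ∉ Formula.bound A → Deriv sortOf Γ (.neg (.all x A))
  | negAllE {Γ x A C} : Deriv sortOf Γ (.neg (.all x A)) →
      Deriv sortOf (insert (.neg A) Γ) C → (∀ D ∈ Γ, x ∉ Formula.free D) →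
      x ∉ Formula.free C → Deriv sortOf Γ C
  -- negated existential (rules of `∀x ¬A`)
  | negExI {Γ x A} : Deriv sortOf Γ (.neg A) → (∀ C ∈ Γ, x ∉ Formula.free C) →
      Deriv sortOf Γ (.neg (.ex x A))
  | negExE {Γ x y A} : Deriv sortOf Γ (.neg (.ex x A)) → sortOf y = sortOf x →
      y ∉ Formula.bound A → Deriv sortOf Γ (.neg (A.subst x y))
  -- double negation (rules of `A`)
  | negNegI {Γ A} : Deriv sortOf Γ A → Deriv sortOf Γ (.neg (.neg A))
  | negNegE {Γ A} : Deriv sortOf Γ (.neg (.neg A)) → Deriv sortOf Γ A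

/-- Equivalence: `A ⇔ B := (A ⊃ B) ∧ (B ⊃ A)`. -/
def Formula.equiv (A B : Formula S V P) : Formula S V P :=
  .conj (.impl A B) (.impl B A)

/-- Strong equivalence: `A ⇔ₛ B := (A ⇔ B) ∧ (¬A ⇔ ¬B)`. -/
def Formula.sequiv (A B : Formula S V P) : Formula S V P :=
  .conj (A.equiv B) ((Formula.neg A).equiv (Formula.neg B))

end PLS0

/-!
Take the Kripke model with a single world in which no atom is either verified or refuted. There
`¬¬(p ⊃ q)` is verified because it means `p ⊃ q`, which holds vacuously, while `¬(p ∧ ¬q)` means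
`¬p ∨ q`, neither side of which is verified. Soundness of the Kripke semantics rules out the
equivalence of the two formulae, which is the second conjunct of the strong equivalence.
-/

namespace PLS0

variable {S V P : Type} {W U : Type*} [Preorder W]

/-- Kripke models of `PL^S₀` with expanding sorted domains. The individuals of all sorts and worlds
live in one carrier `U`, cut out by `dom`. Verification and refutation of atoms are independent
persistent relations, so that an atom may be both, or neither. -/
structure KripkeModel (S P W U : Type*) [Preorder W] where
  dom : W →o (S → Set U)
  verifiesAtom : W →o (P → List U → Prop)
  refutesAtom : W →o (P → List U → Prop)

namespace KripkeModel

/-- Sort-respecting variable assignments into the domains of the world `w`; they remain assignments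
at later worlds because domains only grow. -/
def IsAssignment (M : KripkeModel S P W U) (sortOf : V → S) (w : W) (ρ : V → U) : Prop :=
  ∀ v, ρ v ∈ M.dom w (sortOf v)

variable {M : KripkeModel S P W U} {sortOf : V → S} {w w' : W} {ρ : V → U}

theorem IsAssignment.mono (hρ : M.IsAssignment sortOf w ρ) (hw : w ≤ w') :
    M.IsAssignment sortOf w' ρ :=
  fun v => M.dom.mono hw (sortOf v) (hρ v)

variable [DecidableEq V]

theorem IsAssignment.update (hρ : M.IsAssignment sortOf w ρ) {x : V} {d : U}
    (hd : d ∈ M.dom w (sortOf x)) : M.IsAssignment sortOf w (Function.update ρ x d) := by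
  intro v
  obtain rfl | hv := eq_or_ne v x
  · simpa using hd
  · simpa [hv] using hρ v

mutual

/-- Verification of a formula at a world under an assignment, with the intuitionistic Kripke
clauses; `¬A` is verified where `A` is refuted. -/
def Verifies (M : KripkeModel S P W U) (sortOf : V → S) : Formula S V P → W → (V → U) → Prop
  | .atom p args, w, ρ => M.verifiesAtom w p (args.map ρ)
  | .impl A B, w, ρ => ∀ w' ≥ w, M.Verifies sortOf A w' ρ → M.Verifies sortOf B w' ρ
  | .conj A B, w, ρ => M.Verifies sortOf A w ρ ∧ M.Verifies sortOf B w ρ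
  | .disj A B, w, ρ => M.Verifies sortOf A w ρ ∨ M.Verifies sortOf B w ρ
  | .neg A, w, ρ => M.Refutes sortOf A w ρ
  | .all x A, w, ρ => ∀ w' ≥ w, ∀ d ∈ M.dom w' (sortOf x),
      M.Verifies sortOf A w' (Function.update ρ x d)
  | .ex x A, w, ρ => ∃ d ∈ M.dom w (sortOf x), M.Verifies sortOf A w (Function.update ρ x d)

/-- Refutation of a formula at a world under an assignment: constructive falsity, defined
independently of verification on atoms and given on compound formulae by the De Morgan duals. -/
def Refutes (M : KripkeModel S P W U) (sortOf : V → S) : Formula S V P → W → (V → U) → Prop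
  | .atom p args, w, ρ => M.refutesAtom w p (args.map ρ)
  | .impl A B, w, ρ => M.Verifies sortOf A w ρ ∧ M.Refutes sortOf B w ρ
  | .conj A B, w, ρ => M.Refutes sortOf A w ρ ∨ M.Refutes sortOf B w ρ
  | .disj A B, w, ρ => M.Refutes sortOf A w ρ ∧ M.Refutes sortOf B w ρ
  | .neg A, w, ρ => M.Verifies sortOf A w ρ
  | .all x A, w, ρ => ∃ d ∈ M.dom w (sortOf x), M.Refutes sortOf A w (Function.update ρ x d)
  | .ex x A, w, ρ => ∀ w' ≥ w, ∀ d ∈ M.dom w' (sortOf x),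
      M.Refutes sortOf A w' (Function.update ρ x d)

end

theorem verifies_mono_and_refutes_mono (A : Formula S V P) (hw : w ≤ w') :
    (M.Verifies sortOf A w ρ → M.Verifies sortOf A w' ρ) ∧
      (M.Refutes sortOf A w ρ → M.Refutes sortOf A w' ρ) := by
  induction A generalizing ρ with
  | atom p args =>
    exact ⟨M.verifiesAtom.mono hw p (args.map ρ), M.refutesAtom.mono hw p (args.map ρ)⟩
  | impl A B ihA ihB =>
    exact ⟨fun h w'' hw' => h w'' (hw.trans hw'), And.imp ihA.1 ihB.2⟩
  | conj A B ihA ihB => exact ⟨And.imp ihA.1 ihB.1, Or.imp ihA.2 ihB.2⟩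
  | disj A B ihA ihB => exact ⟨Or.imp ihA.1 ihB.1, And.imp ihA.2 ihB.2⟩
  | neg A ih => exact ⟨ih.2, ih.1⟩
  | all x A ih =>
    exact ⟨fun h w'' hw' => h w'' (hw.trans hw'),
      fun ⟨d, hd, h⟩ => ⟨d, M.dom.mono hw _ hd, ih.2 h⟩⟩
  | ex x A ih =>
    exact ⟨fun ⟨d, hd, h⟩ => ⟨d, M.dom.mono hw _ hd, ih.1 h⟩,
      fun h w'' hw' => h w'' (hw.trans hw')⟩

theorem Verifies.mono {A : Formula S V P} (h : M.Verifies sortOf A w ρ) (hw : w ≤ w') :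
    M.Verifies sortOf A w' ρ :=
  (verifies_mono_and_refutes_mono A hw).1 h

theorem verifies_and_refutes_update_of_notMem_free {A : Formula S V P} {x : V}
    (hx : x ∉ A.free) (d : U) :
    (M.Verifies sortOf A w (Function.update ρ x d) ↔ M.Verifies sortOf A w ρ) ∧
      (M.Refutes sortOf A w (Function.update ρ x d) ↔ M.Refutes sortOf A w ρ) := by
  induction A generalizing w ρ with
  | atom p args =>
    have args_eq : args.map (Function.update ρ x d) = args.map ρ :=
      List.map_congr_left fun v hv => Function.update_of_ne (ne_of_mem_of_not_mem hv hx) _ _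
    simp only [Verifies, Refutes, args_eq, and_self]
  | impl A B ihA ihB | conj A B ihA ihB | disj A B ihA ihB =>
    obtain ⟨hxA, hxB⟩ := not_or.mp hx
    simp only [Verifies, Refutes, ihA hxA, ihB hxB, and_self]
  | neg A ih => exact (ih hx).symm
  | all z A ih | ex z A ih =>
    obtain rfl | hxz := eq_or_ne x z
    · simp only [Verifies, Refutes, Function.update_idem, and_self]
    · have hxA : x ∉ A.free := fun h => hx ⟨h, hxz⟩
      simp only [Verifies, Refutes, Function.update_comm hxz, ih hxA, and_self]

theorem verifies_update_iff_of_notMem_free {A : Formula S V P} {x : V} (hx : x ∉ A.free) (d : U) :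
    M.Verifies sortOf A w (Function.update ρ x d) ↔ M.Verifies sortOf A w ρ :=
  (verifies_and_refutes_update_of_notMem_free hx d).1

theorem verifies_and_refutes_subst {A : Formula S V P} (x : V) {y : V} (hy : y ∉ A.bound) :
    (M.Verifies sortOf (A.subst x y) w ρ ↔
        M.Verifies sortOf A w (Function.update ρ x (ρ y))) ∧
      (M.Refutes sortOf (A.subst x y) w ρ ↔
        M.Refutes sortOf A w (Function.update ρ x (ρ y))) := by
  induction A generalizing w ρ with
  | atom p args =>
    have args_eq : (args.map fun v => if v = x then y else v).map ρ =
        args.map (Function.update ρ x (ρ y)) := by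
      simp [Function.update_apply, apply_ite ρ]
    simp only [Formula.subst, Verifies, Refutes, args_eq, and_self]
  | impl A B ihA ihB | conj A B ihA ihB | disj A B ihA ihB =>
    obtain ⟨hyA, hyB⟩ := not_or.mp hy
    simp only [Formula.subst, Verifies, Refutes, ihA hyA, ihB hyB, and_self]
  | neg A ih => exact (ih hy).symm
  | all z A ih | ex z A ih =>
    obtain ⟨hyz, hyA⟩ := not_or.mp hy
    obtain rfl | hzx := eq_or_ne z x
    · simp only [Formula.subst, if_true, Verifies, Refutes, Function.update_idem, and_self]
    · simp only [Formula.subst, if_neg hzx, Verifies, Refutes, ih hyA,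
        Function.update_of_ne hyz, Function.update_comm hzx, and_self]

theorem verifies_subst {A : Formula S V P} (x : V) {y : V} (hy : y ∉ A.bound) :
    M.Verifies sortOf (A.subst x y) w ρ ↔ M.Verifies sortOf A w (Function.update ρ x (ρ y)) :=
  (verifies_and_refutes_subst x hy).1

/-- Local consequence in `M`: every world verifying `Γ` under an assignment into its domains
verifies `A` under that assignment. -/
def Entails (M : KripkeModel S P W U) (sortOf : V → S) (Γ : Set (Formula S V P))
    (A : Formula S V P) : Prop :=
  ∀ ⦃w ρ⦄, M.IsAssignment sortOf w ρ → (∀ C ∈ Γ, M.Verifies sortOf C w ρ) →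
    M.Verifies sortOf A w ρ

namespace Entails

variable {Γ : Set (Formula S V P)} {A B C : Formula S V P} {x y : V}

theorem impl_intro (h : M.Entails sortOf (insert A Γ) B) : M.Entails sortOf Γ (.impl A B) :=
  fun _ _ hρ hΓ _ hw hA => h (hρ.mono hw) <|
    Set.forall_mem_insert.mpr ⟨hA, fun D hD => (hΓ D hD).mono hw⟩

theorem impl_elim (h : M.Entails sortOf Γ (.impl A B)) (hA : M.Entails sortOf Γ A) :
    M.Entails sortOf Γ B :=
  fun w _ hρ hΓ => h hρ hΓ w le_rfl (hA hρ hΓ)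

theorem conj_intro (hA : M.Entails sortOf Γ A) (hB : M.Entails sortOf Γ B) :
    M.Entails sortOf Γ (.conj A B) :=
  fun _ _ hρ hΓ => ⟨hA hρ hΓ, hB hρ hΓ⟩

theorem conj_left (h : M.Entails sortOf Γ (.conj A B)) : M.Entails sortOf Γ A :=
  fun _ _ hρ hΓ => (h hρ hΓ).1

theorem conj_right (h : M.Entails sortOf Γ (.conj A B)) : M.Entails sortOf Γ B :=
  fun _ _ hρ hΓ => (h hρ hΓ).2

theorem disj_inl (h : M.Entails sortOf Γ A) : M.Entails sortOf Γ (.disj A B) :=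
  fun _ _ hρ hΓ => .inl (h hρ hΓ)

theorem disj_inr (h : M.Entails sortOf Γ B) : M.Entails sortOf Γ (.disj A B) :=
  fun _ _ hρ hΓ => .inr (h hρ hΓ)

theorem disj_elim (h : M.Entails sortOf Γ (.disj A B)) (hA : M.Entails sortOf (insert A Γ) C)
    (hB : M.Entails sortOf (insert B Γ) C) : M.Entails sortOf Γ C :=
  fun _ _ hρ hΓ => (h hρ hΓ).elim
    (fun h => hA hρ (Set.forall_mem_insert.mpr ⟨h, hΓ⟩))
    (fun h => hB hρ (Set.forall_mem_insert.mpr ⟨h, hΓ⟩))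

theorem all_intro (h : M.Entails sortOf Γ A) (hx : ∀ D ∈ Γ, x ∉ D.free) :
    M.Entails sortOf Γ (.all x A) :=
  fun _ _ hρ hΓ _ hw d hd => h ((hρ.mono hw).update hd) fun D hD =>
    (verifies_update_iff_of_notMem_free (hx D hD) d).mpr ((hΓ D hD).mono hw)

theorem all_elim (h : M.Entails sortOf Γ (.all x A)) (hxy : sortOf y = sortOf x)
    (hy : y ∉ A.bound) : M.Entails sortOf Γ (A.subst x y) :=
  fun w ρ hρ hΓ => (verifies_subst x hy).mpr (h hρ hΓ w le_rfl (ρ y) (hxy ▸ hρ y))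

theorem ex_intro (h : M.Entails sortOf Γ (A.subst x y)) (hxy : sortOf y = sortOf x)
    (hy : y ∉ A.bound) : M.Entails sortOf Γ (.ex x A) :=
  fun _ ρ hρ hΓ => ⟨ρ y, hxy ▸ hρ y, (verifies_subst x hy).mp (h hρ hΓ)⟩

theorem ex_elim (h : M.Entails sortOf Γ (.ex x A)) (hC : M.Entails sortOf (insert A Γ) C)
    (hx : ∀ D ∈ Γ, x ∉ D.free) (hxC : x ∉ C.free) : M.Entails sortOf Γ C := by
  intro w ρ hρ hΓ
  obtain ⟨d, hd, hA⟩ := h hρ hΓ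
  rw [← verifies_update_iff_of_notMem_free hxC d]
  exact hC (hρ.update hd) <| Set.forall_mem_insert.mpr
    ⟨hA, fun D hD => (verifies_update_iff_of_notMem_free (hx D hD) d).mpr (hΓ D hD)⟩

end Entails

-- A negated formula and its dual (`¬(A ∧ B)` and `¬A ∨ ¬B`, say) have definitionally equal
-- verification clauses, so the rules for the dual also justify those for the negation.
theorem entails_of_deriv (M : KripkeModel S P W U) {Γ : Set (Formula S V P)} {A : Formula S V P}
    (h : Deriv sortOf Γ A) : M.Entails sortOf Γ A := by
  induction h with
  | ax hA => exact fun _ _ _ hΓ => hΓ _ hA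
  | implI _ ih => exact ih.impl_intro
  | implE _ _ ih ihA => exact ih.impl_elim ihA
  | conjI _ _ ihA ihB => exact ihA.conj_intro ihB
  | conjE1 _ ih => exact ih.conj_left
  | conjE2 _ ih => exact ih.conj_right
  | disjI1 _ ih => exact ih.disj_inl
  | disjI2 _ ih => exact ih.disj_inr
  | disjE _ _ _ ih ihA ihB => exact ih.disj_elim ihA ihB
  | allI _ hx ih => exact ih.all_intro hx
  | allE _ hxy hy ih => exact ih.all_elim hxy hy
  | exI _ hxy hy ih => exact ih.ex_intro hxy hy
  | exE _ _ hx hxC ih ihC => exact ih.ex_elim ihC hx hxC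
  | negImplI _ _ ihA ihB => exact ihA.conj_intro ihB
  | @negImplE1 _ A B _ ih => exact Entails.conj_left (A := A) (B := .neg B) ih
  | @negImplE2 _ A B _ ih => exact Entails.conj_right (A := A) (B := .neg B) ih
  | @negConjI1 _ A B _ ih => exact Entails.disj_inl (A := .neg A) (B := .neg B) ih
  | @negConjI2 _ A B _ ih => exact Entails.disj_inr (A := .neg A) (B := .neg B) ih
  | @negConjE _ A B _ _ _ _ ih ihA ihB =>
    exact Entails.disj_elim (A := .neg A) (B := .neg B) ih ihA ihB
  | negDisjI _ _ ihA ihB => exact ihA.conj_intro ihB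
  | @negDisjE1 _ A B _ ih => exact Entails.conj_left (A := .neg A) (B := .neg B) ih
  | @negDisjE2 _ A B _ ih => exact Entails.conj_right (A := .neg A) (B := .neg B) ih
  | @negAllI _ _ _ A _ hxy hy ih => exact Entails.ex_intro (A := .neg A) ih hxy hy
  | @negAllE _ _ A _ _ _ hx hxC ih ihC => exact Entails.ex_elim (A := .neg A) ih ihC hx hxC
  | negExI _ hx ih => exact ih.all_intro hx
  | @negExE _ _ _ A _ hxy hy ih => exact Entails.all_elim (A := .neg A) ih hxy hy
  | negNegI _ ih => exact ih
  | negNegE _ ih => exact ih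

/-- The one-world model over a single individual in which every atom is a truth-value gap: neither
verified nor refuted. -/
def gap (S P : Type*) : KripkeModel S P Unit Unit where
  dom := ⊤
  verifiesAtom := ⊥
  refutesAtom := ⊥

end KripkeModel

open KripkeModel in
theorem not_deriv_neg_neg_impl_impl_neg_conj_neg [DecidableEq V] (sortOf : V → S)
    (p q : P) (xs ys : List V) :
    ¬ Deriv sortOf ∅
        (.impl (.neg (.neg (.impl (.atom p xs) (.atom q ys))))
          (.neg (.conj (.atom p xs) (.neg (.atom q ys))))) := by
  intro h
  have isAssignment : (gap S P).IsAssignment sortOf () fun _ => () := fun _ => trivial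
  have verifies_neg_neg_impl : (gap S P).Verifies sortOf
      (.neg (.neg (.impl (.atom p xs) (.atom q ys)))) () fun _ => () :=
    fun _ _ verifies_p => verifies_p.elim
  have refutes_p_or_verifies_q : (gap S P).Refutes sortOf (.atom p xs) () (fun _ => ()) ∨
      (gap S P).Verifies sortOf (.atom q ys) () (fun _ => ()) :=
    entails_of_deriv (gap S P) h isAssignment (Set.forall_mem_empty.mpr trivial) () le_rfl
      verifies_neg_neg_impl
  exact refutes_p_or_verifies_q.elim id id

theorem neg_impl_not_sequiv_general [DecidableEq V] (sortOf : V → S) (p q : P) (xs ys : List V) :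
    ¬ Deriv sortOf ∅
        ((Formula.neg (.neg (.impl (.atom p xs) (.atom q ys)))).equiv
          (.neg (.conj (.atom p xs) (.neg (.atom q ys))))) ∧
    ¬ Deriv sortOf ∅
        ((Formula.neg (.impl (.atom p xs) (.atom q ys))).sequiv
          (.conj (.atom p xs) (.neg (.atom q ys)))) :=
  have not_deriv := not_deriv_neg_neg_impl_impl_neg_conj_neg sortOf p q xs ys
  ⟨fun h => not_deriv h.conjE1, fun h => not_deriv h.conjE2.conjE1⟩

end PLS0

open PLS0 in
/-- In `PL^S₀` (with natural numbers as sorts, variables and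
predicate symbols), for distinct propositional variables `A = p` and `B = q`
(nullary atoms), the formula `¬¬(A ⊃ B) ⇔ ¬(A ∧ ¬B)` is not derivable;
consequently the strong equivalence `¬(A ⊃ B) ⇔ₛ (A ∧ ¬B)` is not
derivable. -/
theorem PLS0.neg_impl_not_sequiv (p q : ℕ) (hpq : p ≠ q) :
    ¬ Deriv (id : ℕ → ℕ) ∅
        ((Formula.neg (.neg (.impl (.atom p ([] : List ℕ)) (.atom q [])))).equiv
          (.neg (.conj (.atom p []) (.neg (.atom q []))))) ∧
    ¬ Deriv (id : ℕ → ℕ) ∅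
        ((Formula.neg (.impl (.atom p ([] : List ℕ)) (.atom q []))).sequiv
          (.conj (.atom p []) (.neg (.atom q [])))) :=
  neg_impl_not_sequiv_general id p q [] []
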